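/- Let γ be an admissible curve in G¹₃ whose equiform curvature 𝒦 is identically zero, and let λ : I → ℝ be smooth. Suppose the curve γ̄ = γ + λ·N is an equiform Bertrand mate of γ in the sense that for every x ∈ I the derivative (γ + λN)°(x) lies in the linear span of T(x) and B(x) (equivalently, its N-component λ(x)𝒦(x) + λ°(x) vanishes, which holds when the principal normals of γ̄ and γ are parallel). Then λ is constant on I. -/

import Mathlib

noncomputable section

open Real

/-- Model of the pseudo-Galilean space `G¹₃` as `ℝ³`. -/
abbrev V3 := ℝ × ℝ × ℝ

/-- The pseudo-Galilean scalar product on `ℝ³`. -/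
def pgInner (u v : V3) : ℝ :=
  if u.1 ≠ 0 ∨ v.1 ≠ 0 then u.1 * v.1 else u.2.1 * v.2.1 - u.2.2 * v.2.2

/-- Curvature of the admissible curve `x ↦ (x, y x, z x)`. -/
def curv (y z : ℝ → ℝ) (x : ℝ) : ℝ :=
  Real.sqrt |(deriv (deriv y) x) ^ 2 - (deriv (deriv z) x) ^ 2|

/-- Torsion of the admissible curve `x ↦ (x, y x, z x)`. -/
def tors (y z : ℝ → ℝ) (x : ℝ) : ℝ :=
  (deriv (deriv y) x * deriv (deriv (deriv z)) x -
    deriv (deriv (deriv y)) x * deriv (deriv z) x) / (curv y z x) ^ 2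

/-- Radius of curvature `ρ = 1/κ`. -/
def rho (y z : ℝ → ℝ) (x : ℝ) : ℝ := 1 / curv y z x

/-- Equiform curvature `𝒦 = ρ'`. -/
def eqK (y z : ℝ → ℝ) (x : ℝ) : ℝ := deriv (rho y z) x

/-- Equiform torsion `𝒯 = ρ·τ`. -/
def eqT (y z : ℝ → ℝ) (x : ℝ) : ℝ := rho y z x * tors y z x

/-- Frenet tangent `e₁ = (1, y', z')`. -/
def e1 (y z : ℝ → ℝ) (x : ℝ) : V3 := (1, deriv y x, deriv z x)

/-- Frenet principal normal `e₂ = (1/κ)(0, y'', z'')`. -/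
def e2 (y z : ℝ → ℝ) (x : ℝ) : V3 :=
  (0, deriv (deriv y) x / curv y z x, deriv (deriv z) x / curv y z x)

/-- Frenet binormal `e₃ = (1/κ)(0, ε·z'', ε·y'')`. -/
def e3 (y z : ℝ → ℝ) (ε : ℝ) (x : ℝ) : V3 :=
  (0, ε * deriv (deriv z) x / curv y z x, ε * deriv (deriv y) x / curv y z x)

/-- Equiform tangent `T = ρ·e₁`. -/
def Tv (y z : ℝ → ℝ) (x : ℝ) : V3 := rho y z x • e1 y z x

/-- Equiform principal normal `N = ρ·e₂`. -/
def Nv (y z : ℝ → ℝ) (x : ℝ) : V3 := rho y z x • e2 y z x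

/-- Equiform binormal `B = ρ·e₃`. -/
def Bv (y z : ℝ → ℝ) (ε : ℝ) (x : ℝ) : V3 := rho y z x • e3 y z ε x

/-- Derivative with respect to the equiform parameter: `f° = ρ·f'`. -/
def eqD {E : Type*} [NormedAddCommGroup E] [NormedSpace ℝ E]
    (y z : ℝ → ℝ) (f : ℝ → E) (x : ℝ) : E := rho y z x • deriv f x

/-- `Q₁ = ρ⁻²·N`. -/
def Q1 (y z : ℝ → ℝ) (x : ℝ) : V3 := ((rho y z x) ^ (-2 : ℤ)) • Nv y z x

/-- `Q₂ = ρ⁻³·(−𝒦N + 𝒯B)`. -/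
def Q2 (y z : ℝ → ℝ) (ε : ℝ) (x : ℝ) : V3 :=
  ((rho y z x) ^ (-3 : ℤ)) • ((-(eqK y z x)) • Nv y z x + (eqT y z x) • Bv y z ε x)

/-- `Q₃ = ρ⁻⁴·[(2𝒦² + 𝒯² − 𝒦°)N + (𝒯° − 3𝒦𝒯)B]`. -/
def Q3 (y z : ℝ → ℝ) (ε : ℝ) (x : ℝ) : V3 :=
  ((rho y z x) ^ (-4 : ℤ)) •
    ((2 * (eqK y z x) ^ 2 + (eqT y z x) ^ 2 - eqD y z (eqK y z) x) • Nv y z x +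
      (eqD y z (eqT y z) x - 3 * eqK y z x * eqT y z x) • Bv y z ε x)

/-!
Equiform differentiation of the frame gives `γ° = T` and `N° = 𝒦N + 𝒯B`, so
`(γ + λN)° = T + (λ° + λ𝒦)N + λ𝒯B`. As `N` is never in the span of `T` and `B`, the Bertrand
condition says `λ° + λ𝒦 = 0`, that is, `(λρ)' = 0`. Hence `λρ` is always constant on an interval,
and `𝒦 = ρ' = 0` makes `ρ` constant as well.
-/

section Frenet

variable {y z : ℝ → ℝ} {ε x : ℝ}

lemma curv_pos (hadm : deriv (deriv y) x ^ 2 - deriv (deriv z) x ^ 2 ≠ 0) : 0 < curv y z x :=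
  Real.sqrt_pos.mpr (abs_pos.mpr hadm)

lemma rho_ne_zero (hadm : deriv (deriv y) x ^ 2 - deriv (deriv z) x ^ 2 ≠ 0) : rho y z x ≠ 0 :=
  one_div_ne_zero (curv_pos hadm).ne'

lemma curv_sq (hε : ε = 1 ∨ ε = -1)
    (hsign : 0 < ε * (deriv (deriv y) x ^ 2 - deriv (deriv z) x ^ 2)) :
    curv y z x ^ 2 = ε * (deriv (deriv y) x ^ 2 - deriv (deriv z) x ^ 2) := by
  rw [curv, Real.sq_sqrt (abs_nonneg _), ← abs_of_pos hsign, abs_mul]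
  rcases hε with rfl | rfl <;> simp

lemma differentiableAt_curv (hy : DifferentiableAt ℝ (deriv (deriv y)) x)
    (hz : DifferentiableAt ℝ (deriv (deriv z)) x)
    (hadm : deriv (deriv y) x ^ 2 - deriv (deriv z) x ^ 2 ≠ 0) :
    DifferentiableAt ℝ (curv y z) x :=
  (((hy.pow 2).sub (hz.pow 2)).abs hadm).sqrt (abs_ne_zero.mpr hadm)

lemma hasDerivAt_rho (hy : DifferentiableAt ℝ (deriv (deriv y)) x)
    (hz : DifferentiableAt ℝ (deriv (deriv z)) x)
    (hadm : deriv (deriv y) x ^ 2 - deriv (deriv z) x ^ 2 ≠ 0) :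
    HasDerivAt (rho y z) (eqK y z x) x :=
  ((differentiableAt_const 1).div (differentiableAt_curv hy hz hadm)
    (curv_pos hadm).ne').hasDerivAt

lemma curv_mul_deriv_curv (hy : DifferentiableAt ℝ (deriv (deriv y)) x)
    (hz : DifferentiableAt ℝ (deriv (deriv z)) x) (hε : ε = 1 ∨ ε = -1)
    (hsign : 0 < ε * (deriv (deriv y) x ^ 2 - deriv (deriv z) x ^ 2)) :
    curv y z x * deriv (curv y z) x =
      ε * (deriv (deriv y) x * deriv (deriv (deriv y)) x -
        deriv (deriv z) x * deriv (deriv (deriv z)) x) := by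
  have hκ := (differentiableAt_curv hy hz (right_ne_zero_of_mul hsign.ne')).hasDerivAt.fun_pow 2
  have hD := ((hy.hasDerivAt.fun_pow 2).fun_sub (hz.hasDerivAt.fun_pow 2)).const_mul ε
  have hκD : (fun t => curv y z t ^ 2) =ᶠ[nhds x]
      fun t => ε * (deriv (deriv y) t ^ 2 - deriv (deriv z) t ^ 2) :=
    (hD.continuousAt.eventually_const_lt hsign).mono fun t ht => curv_sq hε ht
  have hunique := hκ.unique (hD.congr_of_eventuallyEq hκD)
  simp only [Nat.cast_ofNat, Nat.add_one_sub_one, pow_one] at hunique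
  linear_combination hunique / 2

lemma hasDerivAt_e2 (hy : DifferentiableAt ℝ (deriv (deriv y)) x)
    (hz : DifferentiableAt ℝ (deriv (deriv z)) x) (hε : ε = 1 ∨ ε = -1)
    (hsign : 0 < ε * (deriv (deriv y) x ^ 2 - deriv (deriv z) x ^ 2)) :
    HasDerivAt (e2 y z) (tors y z x • e3 y z ε x) x := by
  have hadm := right_ne_zero_of_mul hsign.ne'
  have hκ := (differentiableAt_curv hy hz hadm).hasDerivAt
  have hκ0 := (curv_pos hadm).ne'
  have hκ_sq := curv_sq hε hsign
  have hκκ' := curv_mul_deriv_curv hy hz hε hsign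
  refine ((hasDerivAt_const x (0 : ℝ)).prodMk
    ((hy.hasDerivAt.fun_div hκ hκ0).prodMk (hz.hasDerivAt.fun_div hκ hκ0))).congr_deriv ?_
  simp only [tors, e3, Prod.smul_mk, smul_eq_mul, mul_zero, Prod.mk.injEq, true_and]
  constructor <;> field_simp
  · linear_combination deriv (deriv (deriv y)) x * hκ_sq - deriv (deriv y) x * hκκ'
  · linear_combination deriv (deriv (deriv z)) x * hκ_sq - deriv (deriv z) x * hκκ'

lemma hasDerivAt_Nv (hy : DifferentiableAt ℝ (deriv (deriv y)) x)
    (hz : DifferentiableAt ℝ (deriv (deriv z)) x) (hε : ε = 1 ∨ ε = -1)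
    (hsign : 0 < ε * (deriv (deriv y) x ^ 2 - deriv (deriv z) x ^ 2)) :
    HasDerivAt (Nv y z) (eqK y z x • e2 y z x + eqT y z x • e3 y z ε x) x := by
  refine ((hasDerivAt_rho hy hz (right_ne_zero_of_mul hsign.ne')).smul
    (hasDerivAt_e2 hy hz hε hsign)).congr_deriv ?_
  rw [eqT, smul_smul, add_comm]

lemma hasDerivAt_graph (hy : DifferentiableAt ℝ y x) (hz : DifferentiableAt ℝ z x) :
    HasDerivAt (fun t => ((t, y t, z t) : V3)) (e1 y z x) x :=
  (hasDerivAt_id x).prodMk (hy.hasDerivAt.prodMk hz.hasDerivAt)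

end Frenet

section BertrandMate

variable {y z l : ℝ → ℝ} {ε x : ℝ}

lemma eqD_add_smul_Nv (hy : DifferentiableAt ℝ y x) (hz : DifferentiableAt ℝ z x)
    (hy₂ : DifferentiableAt ℝ (deriv (deriv y)) x) (hz₂ : DifferentiableAt ℝ (deriv (deriv z)) x)
    (hl : DifferentiableAt ℝ l x) (hε : ε = 1 ∨ ε = -1)
    (hsign : 0 < ε * (deriv (deriv y) x ^ 2 - deriv (deriv z) x ^ 2)) :
    eqD y z (fun t => ((t, y t, z t) : V3) + l t • Nv y z t) x =
      Tv y z x + (eqD y z l x + l x * eqK y z x) • Nv y z x +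
        (l x * eqT y z x) • Bv y z ε x := by
  have hmate := (hasDerivAt_graph hy hz).fun_add
    (hl.hasDerivAt.fun_smul (hasDerivAt_Nv hy₂ hz₂ hε hsign))
  rw [eqD, hmate.deriv, eqD, Tv, Nv, Bv]
  module

lemma Nv_notMem_span_Tv_Bv (hadm : deriv (deriv y) x ^ 2 - deriv (deriv z) x ^ 2 ≠ 0) :
    Nv y z x ∉ Submodule.span ℝ {Tv y z x, Bv y z ε x} := by
  have hκ := (curv_pos hadm).ne'
  have hρ := rho_ne_zero hadm
  rw [Submodule.mem_span_pair]
  rintro ⟨a, b, hab⟩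
  simp only [Tv, Nv, Bv, e1, e2, e3, Prod.smul_mk, Prod.mk_add_mk, smul_eq_mul,
    Prod.mk.injEq, mul_one, mul_zero, add_zero, mul_eq_zero, hρ, or_false] at hab
  obtain ⟨rfl, hy, hz⟩ := hab
  field_simp at hy hz
  apply hadm
  linear_combination -deriv (deriv y) x * hy + deriv (deriv z) x * hz

lemma eqD_add_smul_Nv_mem_span_iff (hy : DifferentiableAt ℝ y x) (hz : DifferentiableAt ℝ z x)
    (hy₂ : DifferentiableAt ℝ (deriv (deriv y)) x) (hz₂ : DifferentiableAt ℝ (deriv (deriv z)) x)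
    (hl : DifferentiableAt ℝ l x) (hε : ε = 1 ∨ ε = -1)
    (hsign : 0 < ε * (deriv (deriv y) x ^ 2 - deriv (deriv z) x ^ 2)) :
    eqD y z (fun t => ((t, y t, z t) : V3) + l t • Nv y z t) x ∈
        Submodule.span ℝ {Tv y z x, Bv y z ε x} ↔
      eqD y z l x + l x * eqK y z x = 0 := by
  have hT : Tv y z x ∈ Submodule.span ℝ {Tv y z x, Bv y z ε x} :=
    Submodule.mem_span_of_mem (by simp)
  have hB : Bv y z ε x ∈ Submodule.span ℝ {Tv y z x, Bv y z ε x} :=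
    Submodule.mem_span_of_mem (by simp)
  rw [eqD_add_smul_Nv hy hz hy₂ hz₂ hl hε hsign,
    Submodule.add_mem_iff_left _ (Submodule.smul_mem _ _ hB), Submodule.add_mem_iff_right _ hT]
  constructor
  · intro hN
    by_contra hc
    exact Nv_notMem_span_Tv_Bv (right_ne_zero_of_mul hsign.ne')
      ((Submodule.smul_mem_iff _ hc).mp hN)
  · intro hc
    simp [hc]

lemma hasDerivAt_mul_rho (hy : DifferentiableAt ℝ (deriv (deriv y)) x)
    (hz : DifferentiableAt ℝ (deriv (deriv z)) x) (hl : DifferentiableAt ℝ l x)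
    (hadm : deriv (deriv y) x ^ 2 - deriv (deriv z) x ^ 2 ≠ 0) :
    HasDerivAt (fun t => l t * rho y z t) (eqD y z l x + l x * eqK y z x) x :=
  (hl.hasDerivAt.fun_mul (hasDerivAt_rho hy hz hadm)).congr_deriv (by
    rw [eqD, smul_eq_mul, mul_comm (deriv l x)])

end BertrandMate

section Interval

variable {I : Set ℝ} {y z : ℝ → ℝ}

lemma differentiableOn_deriv_deriv {f : ℝ → ℝ} (hI : IsOpen I) (hf : ContDiffOn ℝ 3 f I) :
    DifferentiableOn ℝ (deriv (deriv f)) I :=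
  ((hf.deriv_of_isOpen (m := 2) hI (by norm_num)).deriv_of_isOpen (m := 1) hI
    (by norm_num)).differentiableOn one_ne_zero

lemma rho_eq_of_eqK_eq_zero (hI : IsOpen I) (hIconn : IsPreconnected I)
    (hy : ContDiffOn ℝ 3 y I) (hz : ContDiffOn ℝ 3 z I)
    (hadm : ∀ x ∈ I, deriv (deriv y) x ^ 2 - deriv (deriv z) x ^ 2 ≠ 0)
    (hK : ∀ x ∈ I, eqK y z x = 0) {x x' : ℝ} (hx : x ∈ I) (hx' : x' ∈ I) :
    rho y z x = rho y z x' := by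
  have hρ (t : ℝ) (ht : t ∈ I) : HasDerivAt (rho y z) (eqK y z t) t :=
    hasDerivAt_rho ((differentiableOn_deriv_deriv hI hy).differentiableAt (hI.mem_nhds ht))
      ((differentiableOn_deriv_deriv hI hz).differentiableAt (hI.mem_nhds ht)) (hadm t ht)
  exact hI.is_const_of_deriv_eq_zero hIconn
    (fun t ht => (hρ t ht).differentiableAt.differentiableWithinAt) hK hx hx'

theorem pg_bertrand_lambda_constant_general {ε : ℝ} {l : ℝ → ℝ}
    (hI : IsOpen I) (hIconn : IsPreconnected I)
    (hy : ContDiffOn ℝ 3 y I) (hz : ContDiffOn ℝ 3 z I)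
    (hε : ε = 1 ∨ ε = -1)
    (hsign : ∀ x ∈ I, 0 < ε * (deriv (deriv y) x ^ 2 - deriv (deriv z) x ^ 2))
    (hl : DifferentiableOn ℝ l I)
    (hmate : ∀ x ∈ I,
      eqD y z (fun t => ((t, y t, z t) : V3) + l t • Nv y z t) x ∈
        Submodule.span ℝ {Tv y z x, Bv y z ε x}) :
    ∀ x ∈ I, ∀ x' ∈ I, l x * rho y z x = l x' * rho y z x' := by
  have hlρ (t : ℝ) (ht : t ∈ I) : HasDerivAt (fun s => l s * rho y z s) 0 t := by
    have hIt := hI.mem_nhds ht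
    have hy₁ := (hy.differentiableOn (by norm_num)).differentiableAt hIt
    have hz₁ := (hz.differentiableOn (by norm_num)).differentiableAt hIt
    have hy₂ := (differentiableOn_deriv_deriv hI hy).differentiableAt hIt
    have hz₂ := (differentiableOn_deriv_deriv hI hz).differentiableAt hIt
    have hlt := hl.differentiableAt hIt
    rw [← (eqD_add_smul_Nv_mem_span_iff hy₁ hz₁ hy₂ hz₂ hlt hε (hsign t ht)).mp (hmate t ht)]
    exact hasDerivAt_mul_rho hy₂ hz₂ hlt (right_ne_zero_of_mul (hsign t ht).ne')
  intro x hx x' hx'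
  exact hI.is_const_of_deriv_eq_zero hIconn
    (fun t ht => (hlρ t ht).differentiableAt.differentiableWithinAt)
    (fun t ht => (hlρ t ht).deriv) hx hx'

end Interval

/-- if `𝒦 ≡ 0` and the equiform derivative of the Bertrand mate
`γ̄ = γ + λ·N` lies in `span{T, B}` at every point, then `λ` is constant. -/
theorem pg_bertrand_lambda_constant (I : Set ℝ) (y z : ℝ → ℝ) (ε : ℝ) (l : ℝ → ℝ)
    (hI : IsOpen I) (hIconn : IsPreconnected I)
    (hy : ContDiff ℝ (⊤ : ℕ∞) y) (hz : ContDiff ℝ (⊤ : ℕ∞) z)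
    (hadm : ∀ x ∈ I, (deriv (deriv y) x) ^ 2 - (deriv (deriv z) x) ^ 2 ≠ 0)
    (hε : ε = 1 ∨ ε = -1)
    (hsign : ∀ x ∈ I, 0 < ε * ((deriv (deriv y) x) ^ 2 - (deriv (deriv z) x) ^ 2))
    (hl : ContDiff ℝ (⊤ : ℕ∞) l)
    (hK : ∀ x ∈ I, eqK y z x = 0)
    (hmate : ∀ x ∈ I,
      eqD y z (fun t => ((t, y t, z t) : V3) + l t • Nv y z t) x ∈
        Submodule.span ℝ {Tv y z x, Bv y z ε x}) :
    ∀ x ∈ I, ∀ x' ∈ I, l x = l x' := by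
  intro x hx x' hx'
  have hy₃ : ContDiffOn ℝ 3 y I := (contDiff_infty.mp hy 3).contDiffOn
  have hz₃ : ContDiffOn ℝ 3 z I := (contDiff_infty.mp hz 3).contDiffOn
  have hl₁ : DifferentiableOn ℝ l I := (hl.differentiable (by simp)).differentiableOn
  have hρ : rho y z x = rho y z x' := rho_eq_of_eqK_eq_zero hI hIconn hy₃ hz₃ hadm hK hx hx'
  have hlρ : l x * rho y z x = l x' * rho y z x' :=
    pg_bertrand_lambda_constant_general hI hIconn hy₃ hz₃ hε hsign hl₁ hmate x hx x' hx'
  exact mul_right_cancel₀ (rho_ne_zero (hadm x' hx')) (hρ ▸ hlρ)
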